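/- In the discrete Laplace setup of the context, assume balancedness, boundedness, admissibility, and (when r₁ = +∞) continuity at infinity and the convergence condition; assume moreover that the sum is regular, i.e. I₀ ∪ I₁ ∪ J₀ ∪ J₁ = ∅. Then there exist N₀ ∈ ℕ and C₀ > 0 such that for every n ≥ N₀ and every x ∈ [r₀, r₁], H(x;n) := ∏_{i∈I} Γ(l_i(x)n + α_i(n)) / ∏_{j∈J} Γ(m_j(x)n + β_j(n)) can be written H(x;n) = u(x;n) · n^{γ(n)} · Φ(x)^n · (1 + e(x;n)) with |e(x;n)| ≤ C₀/n. -/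

import Mathlib

/-!
Each Gamma factor is replaced by Stirling's formula, uniformly in a bounded complex shift:
`Γ(t + a) = √(2π) t^(t + a - 1/2) e^(-t) e^η` with `‖η‖ ≤ K / t` for all `‖a‖ ≤ R` and all
sufficiently large real `t` (`Gamma_stirling`). For its proof put
`F(t) = Γ(t + a) e^t t^(-(t + a - 1/2))`. The functional equation of `Γ` gives
`F(t + 1) = F(t) exp (δ(t))`, where `δ(t) = O(t⁻²)` by the Taylor expansion of the logarithm
(`norm_stirlingIncr_le`), and `F(t + N) → √(2π)` by Euler's limit formula for `Γ` and Stirling's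
formula for `N!` (`tendsto_stirlingQuot_add_nat`). Hence `η = -∑ δ(t + k)`, which is `O(1/t)`.

Regularity makes all the forms `l_i`, `m_j` at least some `c > 0` on `[r₀, r₁]`
(`exists_pos_le_affine`), so Stirling's formula applies at `t = l_i(x) n` and `t = m_j(x) n` with
errors `O(1/n)` uniform in `x`. In the sum of the exponents the terms `n (log n - 1) l_i(x)` and
`n (log n - 1) m_j(x)` cancel because `∑ l_i = ∑ m_j`; what remains is the exponent of
`u(x;n) n^γ(n) Φ(x)^n` plus an error `E = O(1/n)`, and `e = exp E - 1`.
-/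

open Complex

/-- The gamma-quotient `H(x;n) = ∏_i Γ(l_i(x)n + α_i(n)) / ∏_j Γ(m_j(x)n + β_j(n))`,
where `l_i(x) = σ_i x + λ_i` and `m_j(x) = τ_j x + μ_j`. -/
noncomputable def dlH {ι κ : Type*} [Fintype ι] [Fintype κ]
    (σv lv : ι → ℝ) (τv mv : κ → ℝ) (α : ι → ℕ → ℂ) (β : κ → ℕ → ℂ)
    (x : ℝ) (n : ℕ) : ℂ :=
  (∏ i, Complex.Gamma ((((σv i * x + lv i) * n : ℝ) : ℂ) + α i n)) /
    ∏ j, Complex.Gamma ((((τv j * x + mv j) * n : ℝ) : ℂ) + β j n)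

/-- The multiplicative phase `Φ(x) = ∏_i l_i(x)^{l_i(x)} · ∏_j m_j(x)^{−m_j(x)}`
(`rpow` convention `0⁰ = 1`). -/
noncomputable def dlPhi {ι κ : Type*} [Fintype ι] [Fintype κ]
    (σv lv : ι → ℝ) (τv mv : κ → ℝ) (x : ℝ) : ℝ :=
  (∏ i, (σv i * x + lv i) ^ (σv i * x + lv i)) *
    ∏ j, (τv j * x + mv j) ^ (-(τv j * x + mv j))

/-- `u(x;n) = (2π)^{(|I|−|J|)/2} ∏_i l_i(x)^{α_i(n)−1/2} ∏_j m_j(x)^{1/2−β_j(n)}`. -/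
noncomputable def dlU {ι κ : Type*} [Fintype ι] [Fintype κ]
    (σv lv : ι → ℝ) (τv mv : κ → ℝ) (α : ι → ℕ → ℂ) (β : κ → ℕ → ℂ)
    (x : ℝ) (n : ℕ) : ℂ :=
  ((2 * Real.pi : ℝ) : ℂ) ^ (((((Fintype.card ι : ℝ) - (Fintype.card κ : ℝ)) / 2 : ℝ)) : ℂ) *
    (∏ i, (((σv i * x + lv i : ℝ)) : ℂ) ^ (α i n - 1 / 2)) *
    ∏ j, (((τv j * x + mv j : ℝ)) : ℂ) ^ (1 / 2 - β j n)

/-- `γ(n) = Σ_i α_i(n) − Σ_j β_j(n) + (|J|−|I|)/2`. -/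
noncomputable def dlGamma {ι κ : Type*} [Fintype ι] [Fintype κ]
    (α : ι → ℕ → ℂ) (β : κ → ℕ → ℂ) (n : ℕ) : ℂ :=
  ∑ i, α i n - ∑ j, β j n + ((((Fintype.card κ : ℝ) - (Fintype.card ι : ℝ)) / 2 : ℝ) : ℂ)

/-! ### Stirling's formula with a bounded complex shift -/

/-- `F(t) = Γ(t + a) e^t t^{-(t + a - 1/2)}` for real `t > 0`. Stirling's formula asserts that
`F(t) → √(2π)` as `t → ∞`. -/
noncomputable def stirlingQuot (a : ℂ) (t : ℝ) : ℂ :=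
  Complex.Gamma (t + a) * exp (t - (t + a - 1 / 2) * (Real.log t : ℝ))

/-- The increment of `log F`: for `t > ‖a‖`, `F(t + 1) = F(t) exp (δ(t))`. -/
noncomputable def stirlingIncr (a : ℂ) (t : ℝ) : ℂ :=
  log (1 + a * (t : ℂ)⁻¹) + 1 - (t + a + 1 / 2) * log (1 + (t : ℂ)⁻¹)

lemma log_one_add_inv_ofReal {t : ℝ} (ht : 0 < t) :
    log (1 + (t : ℂ)⁻¹) = ((Real.log (t + 1) - Real.log t : ℝ) : ℂ) := by
  rw [← Real.log_div (by positivity) ht.ne', Complex.ofReal_log (by positivity)]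
  congr 1
  have : (t : ℂ) ≠ 0 := by exact_mod_cast ht.ne'
  push_cast
  field_simp

lemma stirlingQuot_add_one {a : ℂ} {t : ℝ} (ht : ‖a‖ < t) :
    stirlingQuot a (t + 1) = stirlingQuot a t * exp (stirlingIncr a t) := by
  have ht0 : 0 < t := (norm_nonneg a).trans_lt ht
  have htc : (t : ℂ) ≠ 0 := by exact_mod_cast ht0.ne'
  have hne : (t : ℂ) + a ≠ 0 := by
    intro h
    have : ‖a‖ = t := by
      rw [eq_neg_of_add_eq_zero_right h, norm_neg, Complex.norm_real, Real.norm_of_nonneg ht0.le]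
    linarith
  have hne' : 1 + a * (t : ℂ)⁻¹ ≠ 0 := by
    intro h
    apply hne
    field_simp at h
    simpa using h
  have hG : Complex.Gamma ((t + 1 : ℝ) + a) = (t + a) * Complex.Gamma (t + a) := by
    rw [← Complex.Gamma_add_one _ hne]
    congr 1
    push_cast
    ring
  have hta : (t : ℂ) + a = exp ((Real.log t : ℝ) + log (1 + a * (t : ℂ)⁻¹)) := by
    rw [exp_add, exp_log hne', ← Complex.ofReal_exp, Real.exp_log ht0]
    field_simp
  rw [stirlingQuot, hG, stirlingQuot, stirlingIncr, log_one_add_inv_ofReal ht0]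
  nth_rewrite 1 [hta]
  rw [mul_comm (exp _) (Complex.Gamma _), mul_assoc, mul_assoc, ← exp_add, ← exp_add]
  congr 2
  push_cast
  ring

/-- The first-order terms of `δ(t)` cancel, leaving `O(t⁻²)`, uniformly in `‖a‖ ≤ R`. -/
lemma norm_stirlingIncr_le {R : ℝ} {a : ℂ} (ha : ‖a‖ ≤ R) {t : ℝ} (ht2 : 2 ≤ t)
    (htR : 2 * R ≤ t) :
    ‖stirlingIncr a t‖ ≤ (R ^ 2 + 2 * R + 3) * (t⁻¹) ^ 2 := by
  have hR : 0 ≤ R := (norm_nonneg a).trans ha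
  have ht0 : 0 < t := by linarith
  have htc : (t : ℂ) ≠ 0 := by exact_mod_cast ht0.ne'
  set h : ℝ := t⁻¹ with hh
  have hh0 : 0 < h := by positivity
  have hth : t * h = 1 := mul_inv_cancel₀ ht0.ne'
  have hhalf : h ≤ 1 / 2 := by nlinarith
  have hRh : R * h ≤ 1 / 2 := by nlinarith
  have hcast : (t : ℂ)⁻¹ = (h : ℂ) := by push_cast [hh]; rfl
  have hnh : ‖(h : ℂ)‖ = h := by rw [Complex.norm_real, Real.norm_of_nonneg hh0.le]
  have hnah : ‖a * (h : ℂ)‖ ≤ R * h := by rw [norm_mul, hnh]; gcongr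
  set e₂ : ℂ := log (1 + a * h) - a * h with he₂
  set e₃ : ℂ := log (1 + (h : ℂ)) - (h - h ^ 2 / 2) with he₃
  have inv_le : ∀ y : ℝ, y ≤ 1 / 2 → (1 - y)⁻¹ ≤ 2 := by
    intro y hy
    rw [inv_le_comm₀ (by linarith) (by norm_num)]
    linarith
  have b₂ : ‖e₂‖ ≤ R ^ 2 * h ^ 2 := by
    have h1 : ‖a * (h : ℂ)‖ < 1 := by linarith
    calc ‖e₂‖ ≤ ‖a * (h : ℂ)‖ ^ 2 * (1 - ‖a * (h : ℂ)‖)⁻¹ / 2 :=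
          norm_log_one_add_sub_self_le h1
      _ ≤ (R * h) ^ 2 * 2 / 2 := by
          gcongr
          exact inv_le _ (hnah.trans hRh)
      _ = R ^ 2 * h ^ 2 := by ring
  have b₃ : ‖e₃‖ ≤ h ^ 3 := by
    have h1 : ‖(h : ℂ)‖ < 1 := by linarith
    have hT : logTaylor (2 + 1) (h : ℂ) = h - h ^ 2 / 2 := by
      simp [logTaylor, Finset.sum_range_succ]
      ring
    have := norm_log_sub_logTaylor_le 2 h1
    rw [hT, hnh] at this
    calc ‖e₃‖ ≤ _ := this
      _ ≤ h ^ (2 + 1) * 2 / ((2 : ℕ) + 1) := by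
          gcongr
          exact inv_le _ hhalf
      _ ≤ h ^ 3 := by
          have : 0 < h ^ 3 := by positivity
          norm_num
          linarith
  -- Expand both logarithms with remainders `e₂`, `e₃`; the terms of order `1` and `h` cancel.
  have key : stirlingIncr a t
      = e₂ - t * e₃ + (a + 1 / 2) * h ^ 2 / 2 - (a + 1 / 2) * e₃ := by
    have hthc : (t : ℂ) * h = 1 := by exact_mod_cast hth
    rw [stirlingIncr, hcast, he₂, he₃]
    linear_combination (-1 + (h : ℂ) / 2) * hthc
  have ba : ‖a + 1 / 2‖ ≤ R + 1 / 2 := by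
    refine (norm_add_le _ _).trans ?_
    have : ‖(1 / 2 : ℂ)‖ = 1 / 2 := by norm_num
    linarith
  have c1 : ‖(t : ℂ) * e₃‖ ≤ h ^ 2 := by
    rw [norm_mul, Complex.norm_real, Real.norm_of_nonneg ht0.le]
    calc t * ‖e₃‖ ≤ t * h ^ 3 := by gcongr
      _ = (t * h) * h ^ 2 := by ring
      _ = h ^ 2 := by rw [hth, one_mul]
  have c2 : ‖(a + 1 / 2) * (h : ℂ) ^ 2 / 2‖ ≤ (R + 1 / 2) * h ^ 2 / 2 := by
    rw [norm_div, norm_mul, norm_pow, hnh]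
    norm_num only [Complex.norm_ofNat]
    norm_num only at ba
    gcongr
  have c3 : ‖(a + 1 / 2) * e₃‖ ≤ (R + 1 / 2) * h ^ 2 := by
    rw [norm_mul]
    have : h ^ 3 ≤ h ^ 2 := by nlinarith [sq_nonneg h]
    gcongr
    exact b₃.trans this
  rw [key]
  have t1 := norm_sub_le (e₂ - t * e₃ + (a + 1 / 2) * h ^ 2 / 2) ((a + 1 / 2) * e₃)
  have t2 := norm_add_le (e₂ - t * e₃) ((a + 1 / 2) * (h : ℂ) ^ 2 / 2)
  have t3 := norm_sub_le e₂ (t * e₃)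
  have hsq : 0 < h ^ 2 := by positivity
  nlinarith

lemma Gamma_add_nat_eq_prod {s : ℂ} (hs : ∀ j : ℕ, s + j ≠ 0) (n : ℕ) :
    Complex.Gamma (s + n) = (∏ j ∈ Finset.range n, (s + j)) * Complex.Gamma s := by
  induction n with
  | zero => simp
  | succ n ih =>
    rw [Finset.prod_range_succ, Nat.cast_succ, ← add_assoc, Complex.Gamma_add_one _ (hs n), ih]
    ring

/-- `N! = s_N √2 N^(N + 1/2) e^(-N)`, where `s_N → √π` is Mathlib's `stirlingSeq`. -/
lemma factorial_eq_stirlingSeq {N : ℕ} (hN : N ≠ 0) :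
    (N.factorial : ℝ) = Stirling.stirlingSeq N * √2 *
      Real.exp (Real.log N / 2 + N * Real.log N - N) := by
  have hN0 : (0 : ℝ) < N := by positivity
  have h1 : √(2 * N : ℝ) = √2 * Real.exp (Real.log N / 2) := by
    rw [Real.sqrt_mul (by norm_num)]
    congr 1
    rw [Real.exp_half, Real.exp_log hN0]
  have h2 : ((N : ℝ) / Real.exp 1) ^ N = Real.exp (N * Real.log N - N) := by
    nth_rewrite 1 [← Real.exp_log hN0]
    rw [← Real.exp_sub, ← Real.exp_nat_mul]
    congr 1
    ring
  have h3 : √(2 * N : ℝ) * ((N : ℝ) / Real.exp 1) ^ N ≠ 0 := by positivity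
  have h4 : (N.factorial : ℝ)
      = Stirling.stirlingSeq N * (√(2 * N : ℝ) * ((N : ℝ) / Real.exp 1) ^ N) := by
    rw [Stirling.stirlingSeq, div_mul_cancel₀ _ h3]
  rw [h4, h1, h2, add_sub_assoc, Real.exp_add]
  ring

/-- Stirling's limit along `t + ℕ`, obtained from Euler's limit formula for `Γ` and Stirling's
formula for factorials. -/
lemma tendsto_stirlingQuot_add_nat {a : ℂ} {t : ℝ} (ht : ‖a‖ < t) :
    Filter.Tendsto (fun N : ℕ => stirlingQuot a (t + (N + 1 : ℕ))) Filter.atTop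
      (nhds (exp ((Real.log (2 * Real.pi) / 2 : ℝ) : ℂ))) := by
  have ht0 : 0 < t := (norm_nonneg a).trans_lt ht
  set s : ℂ := t + a with hs
  have hre : 0 < s.re := by
    have := (abs_le.1 (Complex.abs_re_le_norm a)).1
    simp only [hs, Complex.add_re, Complex.ofReal_re]
    linarith
  have hsj : ∀ j : ℕ, s + j ≠ 0 := by
    intro j h
    have := congrArg Complex.re h
    simp only [Complex.add_re, Complex.natCast_re, Complex.zero_re] at this
    have : (0 : ℝ) ≤ j := by positivity
    linarith
  have hΓ : Complex.Gamma s ≠ 0 := Complex.Gamma_ne_zero_of_re_pos hre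
  have hlog : Filter.Tendsto (fun N : ℕ => Real.log (1 + (t + 1) / N)) Filter.atTop (nhds 0) := by
    have h1 : Filter.Tendsto (fun N : ℕ => 1 + (t + 1) / (N : ℝ)) Filter.atTop (nhds (1 + 0)) :=
      tendsto_const_nhds.add (tendsto_const_div_atTop_nhds_zero_nat _)
    rw [add_zero] at h1
    simpa [Function.comp_def] using (Real.continuousAt_log one_ne_zero).tendsto.comp h1
  have hNlog : Filter.Tendsto (fun N : ℕ => (N : ℝ) * Real.log (1 + (t + 1) / N)) Filter.atTop
      (nhds (t + 1)) :=
    (Real.tendsto_mul_log_one_add_div_atTop (t + 1)).comp tendsto_natCast_atTop_atTop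
  have hlim : Filter.Tendsto (fun N : ℕ => Complex.Gamma s / GammaSeq s N *
      ((Stirling.stirlingSeq N * √2 : ℝ) : ℂ) *
      exp (t + 1 - (((N : ℝ) * Real.log (1 + (t + 1) / N) : ℝ)
        + (t + a + 1 / 2) * (Real.log (1 + (t + 1) / N) : ℝ)))) Filter.atTop
      (nhds (Complex.Gamma s / Complex.Gamma s * ((√Real.pi * √2 : ℝ) : ℂ) *
        exp (t + 1 - (((t + 1 : ℝ) : ℂ) + (t + a + 1 / 2) * ((0 : ℝ) : ℂ))))) := by
    refine Filter.Tendsto.mul (Filter.Tendsto.mul ?_ ?_) ?_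
    · exact tendsto_const_nhds.div (GammaSeq_tendsto_Gamma s) hΓ
    · exact (Complex.continuous_ofReal.tendsto _).comp
        (Stirling.tendsto_stirlingSeq_sqrt_pi.mul_const _)
    · refine (Complex.continuous_exp.tendsto _).comp (tendsto_const_nhds.sub ?_)
      exact ((Complex.continuous_ofReal.tendsto _).comp hNlog).add
        (((Complex.continuous_ofReal.tendsto _).comp hlog).const_mul _)
  have hval : Complex.Gamma s / Complex.Gamma s * ((√Real.pi * √2 : ℝ) : ℂ) *
        exp (t + 1 - (((t + 1 : ℝ) : ℂ) + (t + a + 1 / 2) * ((0 : ℝ) : ℂ)))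
      = exp ((Real.log (2 * Real.pi) / 2 : ℝ) : ℂ) := by
    rw [div_self hΓ, ← Complex.ofReal_exp, Real.exp_half, Real.exp_log (by positivity),
      ← Real.sqrt_mul Real.pi_pos.le, mul_comm Real.pi]
    simp
  rw [hval] at hlim
  refine hlim.congr' ?_
  filter_upwards [Filter.eventually_ne_atTop 0] with N hN
  have hN0 : (0 : ℝ) < N := by positivity
  have hP : ∏ j ∈ Finset.range (N + 1), (s + j) ≠ 0 :=
    Finset.prod_ne_zero_iff.2 fun j _ => hsj j
  have hcN : (N : ℂ) ≠ 0 := by exact_mod_cast hN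
  have hpow : (N : ℂ) ^ s = exp ((Real.log N : ℝ) * s) := by
    rw [cpow_def_of_ne_zero hcN, Complex.natCast_log]
  have hfac : (N.factorial : ℂ) = ((Stirling.stirlingSeq N * √2 : ℝ) : ℂ) *
      exp ((Real.log N / 2 + N * Real.log N - N : ℝ) : ℂ) := by
    rw [← Complex.ofReal_exp, ← Complex.ofReal_mul, ← factorial_eq_stirlingSeq hN]
    simp
  have hGam : Complex.Gamma (((t + (N + 1 : ℕ) : ℝ) : ℂ) + a) =
      Complex.Gamma s / GammaSeq s N * ((N : ℂ) ^ s * N.factorial) := by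
    have : ((t + (N + 1 : ℕ) : ℝ) : ℂ) + a = s + (N + 1 : ℕ) := by
      rw [hs]; push_cast; ring
    rw [this, Gamma_add_nat_eq_prod hsj, GammaSeq]
    have h1 : (N : ℂ) ^ s ≠ 0 := by rw [hpow]; exact exp_ne_zero _
    have h2 : (N.factorial : ℂ) ≠ 0 := by exact_mod_cast N.factorial_ne_zero
    field_simp
  have hlogadd : Real.log (t + (N + 1 : ℕ)) = Real.log N + Real.log (1 + (t + 1) / N) := by
    rw [← Real.log_mul hN0.ne' (by positivity)]
    congr 1
    push_cast
    field_simp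
    ring
  rw [stirlingQuot, hGam, hlogadd, hpow, hfac]
  have hE : ∀ A B x y z w : ℂ, z + w + y = x → A * B * exp x =
      A * (exp z * (B * exp w)) * exp y := by
    intro A B x y z w h
    rw [← h, exp_add, exp_add]
    ring
  apply hE
  rw [hs]
  push_cast
  ring

/-- Comparison with the telescoping sum of `1 / ((t + k - 1) (t + k))`. -/
lemma sum_inv_sq_le {t : ℝ} (ht : 2 ≤ t) (n : ℕ) :
    ∑ k ∈ Finset.range n, ((t + k)⁻¹) ^ 2 ≤ 2 * t⁻¹ := by
  have h1 : ∑ k ∈ Finset.range n, ((t + k)⁻¹) ^ 2 ≤ (t - 1)⁻¹ - (t + n - 1)⁻¹ := by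
    induction n with
    | zero => simp
    | succ n ih =>
      rw [Finset.sum_range_succ]
      have hn : (0 : ℝ) ≤ n := by positivity
      have ha : 0 < t + n - 1 := by linarith
      have hb : 0 < t + n := by linarith
      have : ((t + n)⁻¹) ^ 2 ≤ (t + n - 1)⁻¹ - (t + n)⁻¹ := by
        have : (t + n - 1)⁻¹ - (t + n)⁻¹ - ((t + n)⁻¹) ^ 2
            = (t + n - 1)⁻¹ * ((t + n)⁻¹) ^ 2 := by
          field_simp
          ring
        have : 0 < (t + n - 1)⁻¹ * ((t + n)⁻¹) ^ 2 := by positivity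
        linarith
      have e : t + ((n + 1 : ℕ) : ℝ) - 1 = t + n := by push_cast; ring
      rw [e]
      linarith
  have hn : (0 : ℝ) ≤ n := by positivity
  have h2 : 0 ≤ (t + n - 1)⁻¹ := inv_nonneg.2 (by linarith)
  have h3 : (t - 1)⁻¹ ≤ 2 * t⁻¹ := by
    have : 0 < t - 1 := by linarith
    rw [← div_eq_mul_inv, inv_eq_one_div, div_le_div_iff₀ this (by linarith)]
    linarith
  linarith

/-- Stirling's formula for `Γ(t + a)`, `t → +∞` real, with the relative error written as `exp η`,
`η = O(1/t)` uniformly in `‖a‖ ≤ R`. -/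
lemma Gamma_stirling {R : ℝ} {a : ℂ} (ha : ‖a‖ ≤ R) {t : ℝ} (ht2 : 2 ≤ t) (htR : 2 * R ≤ t) :
    ∃ η : ℂ, Complex.Gamma (t + a) = exp ((t + a - 1 / 2) * (Real.log t : ℝ) - t
        + (Real.log (2 * Real.pi) / 2 : ℝ) + η) ∧
      ‖η‖ ≤ 2 * (R ^ 2 + 2 * R + 3) / t := by
  have hR : 0 ≤ R := (norm_nonneg a).trans ha
  set K := R ^ 2 + 2 * R + 3 with hK
  have hK0 : 0 < K := by positivity
  have hk : ∀ k : ℕ, t ≤ t + k := fun k => by linarith [(Nat.cast_nonneg k : (0 : ℝ) ≤ k)]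
  have hak : ∀ k : ℕ, ‖a‖ < t + k := fun k => by linarith [hk k]
  have hδ : ∀ k : ℕ, ‖stirlingIncr a (t + k)‖ ≤ K * ((t + k)⁻¹) ^ 2 := fun k =>
    norm_stirlingIncr_le ha (by linarith [hk k]) (by linarith [hk k])
  have hpart : ∀ n : ℕ, ∑ k ∈ Finset.range n, ‖stirlingIncr a (t + k)‖ ≤ 2 * K / t := by
    intro n
    calc _ ≤ ∑ k ∈ Finset.range n, K * ((t + k)⁻¹) ^ 2 := Finset.sum_le_sum fun k _ => hδ k
      _ = K * ∑ k ∈ Finset.range n, ((t + k)⁻¹) ^ 2 := by rw [Finset.mul_sum]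
      _ ≤ K * (2 * t⁻¹) := by gcongr; exact sum_inv_sq_le ht2 n
      _ = 2 * K / t := by ring
  have hsumn : Summable fun k : ℕ => ‖stirlingIncr a (t + k)‖ :=
    summable_of_sum_range_le (fun _ => norm_nonneg _) hpart
  have hsum : Summable fun k : ℕ => stirlingIncr a (t + k) := hsumn.of_norm
  have hiter : ∀ n : ℕ, stirlingQuot a (t + n)
      = stirlingQuot a t * exp (∑ k ∈ Finset.range n, stirlingIncr a (t + k)) := by
    intro n
    induction n with
    | zero => simp
    | succ n ih =>
      rw [Finset.sum_range_succ, exp_add, ← mul_assoc, ← ih, ← stirlingQuot_add_one (hak n)]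
      push_cast
      ring_nf
  set S := ∑' k : ℕ, stirlingIncr a (t + k) with hS
  have hlim1 : Filter.Tendsto (fun N : ℕ => stirlingQuot a (t + (N + 1 : ℕ))) Filter.atTop
      (nhds (stirlingQuot a t * exp S)) := by
    simp_rw [hiter]
    refine Filter.Tendsto.const_mul _ ((Complex.continuous_exp.tendsto _).comp ?_)
    exact hsum.hasSum.tendsto_sum_nat.comp (Filter.tendsto_add_atTop_nat 1)
  have heq := tendsto_nhds_unique hlim1
    (tendsto_stirlingQuot_add_nat (a := a) (t := t) (by simpa using hak 0))
  refine ⟨-S, ?_, ?_⟩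
  · have h1 : stirlingQuot a t = exp (((Real.log (2 * Real.pi) / 2 : ℝ) : ℂ) - S) := by
      rw [exp_sub, ← heq, mul_div_cancel_right₀ _ (exp_ne_zero _)]
    rw [stirlingQuot] at h1
    have h2 := congrArg (· * exp (-(t - (t + a - 1 / 2) * (Real.log t : ℝ)))) h1
    simp only [mul_assoc, ← exp_add, add_neg_cancel, exp_zero, mul_one] at h2
    rw [h2]
    congr 1
    ring
  · rw [norm_neg]
    exact (norm_tsum_le_tsum_norm hsumn).trans
      (hsumn.tsum_le_of_sum_range_le hpart)

/-! ### The regular discrete Laplace asymptotics -/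

/-- Regularity bounds all the affine forms below by a common positive constant on `[r0, r1]`. -/
lemma exists_pos_le_affine {ι : Type*} [Finite ι] {σ l : ι → ℝ} {r0 : ℝ} {r1 : EReal}
    (hr01 : (r0 : EReal) < r1) (h0 : ∀ i, 0 < σ i * r0 + l i)
    (h1 : ∀ i, ∀ y : ℝ, r1 = (y : EReal) → 0 < σ i * y + l i) (htop : ∀ i, r1 = ⊤ → 0 < σ i) :
    ∃ c : ℝ, 0 < c ∧ ∀ i, ∀ x : ℝ, r0 ≤ x → (x : EReal) ≤ r1 → c ≤ σ i * x + l i := by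
  have hi : ∀ i, ∃ c : ℝ, 0 < c ∧ ∀ x : ℝ, r0 ≤ x → (x : EReal) ≤ r1 → c ≤ σ i * x + l i := by
    intro i
    induction r1 with
    | bot => simp at hr01
    | top =>
      refine ⟨_, h0 i, fun x hx _ => ?_⟩
      have := htop i rfl
      nlinarith
    | coe y =>
      refine ⟨min (σ i * r0 + l i) (σ i * y + l i), lt_min (h0 i) (h1 i y rfl), ?_⟩
      intro x hx hxy
      have hxy' : x ≤ y := by exact_mod_cast hxy
      rcases le_total 0 (σ i) with hs | hs
      · exact (min_le_left _ _).trans (by nlinarith)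
      · exact (min_le_right _ _).trans (by nlinarith)
  choose c hc0 hc using hi
  have hev : ∀ᶠ d in nhdsWithin (0 : ℝ) (Set.Ioi 0), 0 < d ∧ ∀ i, d ≤ c i := by
    refine (eventually_mem_nhdsWithin).and (Filter.eventually_all.2 fun i => ?_)
    exact nhdsWithin_le_nhds (Iic_mem_nhds (hc0 i))
  obtain ⟨d, hd, hdc⟩ := hev.exists
  exact ⟨d, hd, fun i x hx hx1 => (hdc i).trans (hc i x hx hx1)⟩

/-- The exponents of Stirling's formula at `y_i n + a_i`, summed over `i` and sorted by their
dependence on `L = log n`. -/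
lemma sum_stirling_exponent {ν : Type*} [Fintype ν] (n : ℕ) (y : ν → ℝ) (a ζ : ν → ℂ)
    (L k : ℂ) :
    ∑ i, ((y i * n + a i - 1 / 2) * (log (y i) + L) - y i * n + k + ζ i)
      = n * ∑ i, log (y i) * y i + ∑ i, log (y i) * (a i - 1 / 2)
        + n * (L - 1) * ∑ i, (y i : ℂ) + L * (∑ i, a i - Fintype.card ν / 2)
        + Fintype.card ν * k + ∑ i, ζ i := by
  have h3 : (Fintype.card ν : ℂ) = ∑ _i : ν, (1 : ℂ) := by simp
  rw [h3]
  simp only [Finset.mul_sum, Finset.sum_div, ← Finset.sum_add_distrib,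
    ← Finset.sum_sub_distrib, Finset.sum_mul]
  exact Finset.sum_congr rfl fun i _ => by ring

/-- In the discrete Laplace setup, under balancedness, boundedness,
admissibility, continuity at infinity and convergence (when `r₁ = ∞`), and
regularity (`I₀ ∪ I₁ ∪ J₀ ∪ J₁ = ∅`), there are `N₀` and `C₀ > 0` such that for
`n ≥ N₀` and `x ∈ [r₀, r₁]`,
`H(x;n) = u(x;n)·n^{γ(n)}·Φ(x)^n·(1 + e(x;n))` with `|e(x;n)| ≤ C₀/n`. -/
theorem discrete_laplace_regular_pointwise {ι κ : Type*} [Fintype ι] [Fintype κ]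
    (σv lv : ι → ℝ) (τv mv : κ → ℝ) (α : ι → ℕ → ℂ) (β : κ → ℕ → ℂ)
    (r0 : ℝ) (r1 : EReal)
    (hr0 : 0 ≤ r0) (hr01 : (r0 : EReal) < r1)
    (hbalσ : ∑ i, σv i = ∑ j, τv j) (hbalL : ∑ i, lv i = ∑ j, mv j)
    (R : ℝ) (hR : 0 < R)
    (hα : ∀ i n, ‖α i n‖ ≤ R) (hβ : ∀ j n, ‖β j n‖ ≤ R)
    (hσ : ∀ i, σv i ≠ 0) (hτ : ∀ j, τv j ≠ 0)
    (hl0 : ∀ i, 0 ≤ σv i * r0 + lv i) (hm0 : ∀ j, 0 ≤ τv j * r0 + mv j)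
    (hl1 : ∀ i, (∀ y : ℝ, r1 = (y : EReal) → 0 ≤ σv i * y + lv i) ∧ (r1 = ⊤ → 0 < σv i))
    (hm1 : ∀ j, (∀ y : ℝ, r1 = (y : EReal) → 0 ≤ τv j * y + mv j) ∧ (r1 = ⊤ → 0 < τv j))
    (hinf : r1 = ⊤ → ∏ i, σv i ^ σv i ≤ ∏ j, τv j ^ τv j)
    (hconv : r1 = ⊤ → (∏ i, σv i ^ σv i) = ∏ j, τv j ^ τv j →
      ∃ s : ℝ, 0 < s ∧ ∀ n : ℕ, (dlGamma α β n).re ≤ -1 - s)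
    (hregI0 : ∀ i, σv i * r0 + lv i ≠ 0) (hregJ0 : ∀ j, τv j * r0 + mv j ≠ 0)
    (hregI1 : ∀ i, ∀ y : ℝ, r1 = (y : EReal) → σv i * y + lv i ≠ 0)
    (hregJ1 : ∀ j, ∀ y : ℝ, r1 = (y : EReal) → τv j * y + mv j ≠ 0) :
    ∃ N0 : ℕ, ∃ C0 : ℝ, 0 < C0 ∧ ∀ n : ℕ, N0 ≤ n → ∀ x : ℝ,
      r0 ≤ x → (x : EReal) ≤ r1 → ∃ e : ℂ,
        dlH σv lv τv mv α β x n =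
          dlU σv lv τv mv α β x n * (n : ℂ) ^ dlGamma α β n *
            ((dlPhi σv lv τv mv x ^ n : ℝ) : ℂ) * (1 + e) ∧
        ‖e‖ ≤ C0 / n := by
  obtain ⟨c₁, hc₁, hc₁l⟩ := exists_pos_le_affine (σ := σv) (l := lv) hr01
    (fun i => (hl0 i).lt_of_ne' (hregI0 i))
    (fun i y hy => ((hl1 i).1 y hy).lt_of_ne' (hregI1 i y hy)) (fun i => (hl1 i).2)
  obtain ⟨c₂, hc₂, hc₂m⟩ := exists_pos_le_affine (σ := τv) (l := mv) hr01
    (fun j => (hm0 j).lt_of_ne' (hregJ0 j))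
    (fun j y hy => ((hm1 j).1 y hy).lt_of_ne' (hregJ1 j y hy)) (fun j => (hm1 j).2)
  set c := min c₁ c₂ with hc
  have hc0 : 0 < c := lt_min hc₁ hc₂
  -- `B / n` bounds each single error exponent, so `D / n` bounds their signed sum.
  set B : ℝ := 2 * (R ^ 2 + 2 * R + 3) / c with hB
  have hB0 : 0 < B := by positivity
  set D : ℝ := (Fintype.card ι + Fintype.card κ) * B with hD
  have hD0 : 0 ≤ D := by positivity
  -- Beyond `N`, every argument `y n` is at least `2 + 2 R` and the total exponent is at most `1`.
  obtain ⟨N, hN⟩ := exists_nat_ge ((2 + 2 * R) / c + D + 1)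
  refine ⟨N, 2 * D + 1, by positivity, ?_⟩
  intro n hn x hx0 hx1
  have hnN : (N : ℝ) ≤ n := by exact_mod_cast hn
  have hq0 : 0 ≤ (2 + 2 * R) / c := by positivity
  have hn0 : (0 : ℝ) < n := by linarith
  have hcn : 2 + 2 * R ≤ c * n := by
    rw [← div_le_iff₀' hc0]
    linarith
  have hDn : D / n ≤ 1 := by
    rw [div_le_one hn0]
    linarith
  have hnc : (n : ℂ) ≠ 0 := by exact_mod_cast hn0.ne'
  -- Each factor, in exponential form with `log (y n) = log y + log n`.
  have factor : ∀ (y : ℝ) (a : ℂ), c ≤ y → ‖a‖ ≤ R → ∃ η : ℂ, ‖η‖ ≤ B / n ∧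
      Complex.Gamma (((y * n : ℝ) : ℂ) + a) =
        exp ((y * n + a - 1 / 2) * (log y + log n) - y * n
          + (Real.log (2 * Real.pi) / 2 : ℝ) + η) := by
    intro y a hy ha
    have hy0 : 0 < y := hc0.trans_le hy
    have hcy : c * n ≤ y * n := by gcongr
    obtain ⟨η, h1, h2⟩ := Gamma_stirling ha (t := y * n) (by linarith) (by linarith)
    refine ⟨η, h2.trans ?_, ?_⟩
    · rw [hB, div_div]
      gcongr
    · rw [h1, Real.log_mul hy0.ne' hn0.ne']
      push_cast [Complex.ofReal_log hy0.le, Complex.natCast_log]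
      rfl
  have hlpos : ∀ i, 0 < σv i * x + lv i := fun i => hc₁.trans_le (hc₁l i x hx0 hx1)
  have hmpos : ∀ j, 0 < τv j * x + mv j := fun j => hc₂.trans_le (hc₂m j x hx0 hx1)
  choose η hη hηG using fun i => factor (σv i * x + lv i) (α i n)
    ((min_le_left _ _).trans (hc₁l i x hx0 hx1)) (hα i n)
  choose θ hθ hθG using fun j => factor (τv j * x + mv j) (β j n)
    ((min_le_right _ _).trans (hc₂m j x hx0 hx1)) (hβ j n)
  have hbal : ∑ i, (σv i * x + lv i) = ∑ j, (τv j * x + mv j) := by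
    rw [Finset.sum_add_distrib, Finset.sum_add_distrib, ← Finset.sum_mul, ← Finset.sum_mul,
      hbalσ, hbalL]
  set l : ι → ℝ := fun i => σv i * x + lv i with hl
  set m : κ → ℝ := fun j => τv j * x + mv j with hm
  -- The logarithm of `1 + e`.
  set E : ℂ := ∑ i, η i - ∑ j, θ j with hE
  have hEb : ‖E‖ ≤ D / n := by
    calc ‖E‖ ≤ ‖∑ i, η i‖ + ‖∑ j, θ j‖ := norm_sub_le _ _
      _ ≤ ∑ _i : ι, B / n + ∑ _j : κ, B / n :=
          add_le_add (norm_sum_le_of_le _ fun i _ => hη i) (norm_sum_le_of_le _ fun j _ => hθ j)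
      _ = D / n := by
          simp only [Finset.sum_const, Finset.card_univ, nsmul_eq_mul, hD]
          ring
  refine ⟨exp E - 1, ?_, ?_⟩
  · have hH : dlH σv lv τv mv α β x n = exp
        (∑ i, ((l i * n + α i n - 1 / 2) * (log (l i) + log n) - l i * n
          + (Real.log (2 * Real.pi) / 2 : ℝ) + η i)
        - ∑ j, ((m j * n + β j n - 1 / 2) * (log (m j) + log n) - m j * n
          + (Real.log (2 * Real.pi) / 2 : ℝ) + θ j)) := by
      rw [exp_sub, exp_sum, exp_sum, dlH]
      simp_rw [hηG, hθG]
      rfl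
    have hPhi : ((dlPhi σv lv τv mv x ^ n : ℝ) : ℂ) =
        exp (n * (∑ i, log (l i) * l i - ∑ j, log (m j) * m j)) := by
      have h1 : dlPhi σv lv τv mv x =
          Real.exp (∑ i, Real.log (l i) * l i - ∑ j, Real.log (m j) * m j) := by
        rw [sub_eq_add_neg, ← Finset.sum_neg_distrib, Real.exp_add, Real.exp_sum, Real.exp_sum,
          dlPhi]
        congr 1
        · exact Finset.prod_congr rfl fun i _ => Real.rpow_def_of_pos (hlpos i) _
        · refine Finset.prod_congr rfl fun j _ => ?_
          rw [Real.rpow_def_of_pos (hmpos j), mul_neg]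
      rw [h1, ← Real.exp_nat_mul, Complex.ofReal_exp]
      push_cast
      simp only [hl, hm, Complex.ofReal_log (hlpos _).le, Complex.ofReal_log (hmpos _).le]
    have hU : dlU σv lv τv mv α β x n = exp
        ((Real.log (2 * Real.pi) : ℝ) * ((Fintype.card ι - Fintype.card κ) / 2)
          + ∑ i, log (l i) * (α i n - 1 / 2) + ∑ j, log (m j) * (1 / 2 - β j n)) := by
      have h2π : ((2 * Real.pi : ℝ) : ℂ) ≠ 0 := by
        exact_mod_cast (by positivity : (2 * Real.pi : ℝ) ≠ 0)
      rw [exp_add, exp_add, exp_sum, exp_sum, dlU]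
      congr 1
      · congr 1
        · rw [cpow_def_of_ne_zero h2π, Complex.ofReal_log (by positivity)]
          push_cast
          rfl
        · exact Finset.prod_congr rfl fun i _ =>
            cpow_def_of_ne_zero (by exact_mod_cast (hlpos i).ne') _
      · exact Finset.prod_congr rfl fun j _ =>
          cpow_def_of_ne_zero (by exact_mod_cast (hmpos j).ne') _
    rw [hH, hU, hPhi, cpow_def_of_ne_zero hnc, add_sub_cancel, ← exp_add, ← exp_add, ← exp_add]
    congr 1
    -- Balancedness cancels the terms `n (log n - 1) ∑ l_i` and `n (log n - 1) ∑ m_j`.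
    have hbalc : ∑ i, (l i : ℂ) = ∑ j, (m j : ℂ) := by exact_mod_cast hbal
    have hneg : ∑ j, log (m j : ℂ) * (1 / 2 - β j n)
        = - ∑ j, log (m j : ℂ) * (β j n - 1 / 2) := by
      rw [← Finset.sum_neg_distrib]
      exact Finset.sum_congr rfl fun j _ => by ring
    rw [sum_stirling_exponent, sum_stirling_exponent, hneg, hbalc, dlGamma, hE]
    push_cast
    ring
  · have h1 : ‖E‖ ≤ 1 := hEb.trans hDn
    calc ‖exp E - 1‖ ≤ 2 * ‖E‖ := norm_exp_sub_one_le h1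
      _ ≤ 2 * (D / n) := by gcongr
      _ = 2 * D / n := by ring
      _ ≤ (2 * D + 1) / n := by gcongr; linarith
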